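/- Let X and Y be normed linear spaces, F : X ⇉ Y a set-valued mapping with convex graph, (x̄,ȳ) ∈ gph F, and g : Y → [0,∞) a convex function satisfying the standing assumptions. Then all five strict g-slopes of F at (x̄,ȳ) coincide: |∇F|_g^◇(x̄,ȳ) = |∇F|_g^+(x̄,ȳ) = |∇F|_g(x̄,ȳ) = |∂F|_g^+(x̄,ȳ) = |∂F|_g(x̄,ȳ). -/

import Mathlib

open Filter Metric Set Topology ENNReal

/-- The parametric metric `d_ρ((x,y),(u,v)) = max{‖x−u‖, ρ‖y−v‖}` on a product. -/
noncomputable def dRho {X Y : Type*} [NormedAddCommGroup X] [NormedAddCommGroup Y]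
    (ρ : ℝ) (p q : X × Y) : ℝ :=
  max (dist p.1 q.1) (ρ * dist p.2 q.2)

/-- The graph of a set-valued mapping `F : X ⇉ Y`. -/
def svGraph {X Y : Type*} (F : X → Set Y) : Set (X × Y) := {p : X × Y | p.2 ∈ F p.1}

/-- The (g,ρ)-slope `|∇F|_{g,ρ}(x,y)` of `F` at `p = (x,y) ∈ gph F`. -/
noncomputable def gSlopeRho {X Y : Type*} [NormedAddCommGroup X] [NormedAddCommGroup Y]
    (F : X → Set Y) (g : Y → ℝ) (ρ : ℝ) (p : X × Y) : ℝ≥0∞ :=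
  Filter.limsup
    (fun q => ENNReal.ofReal (max (g p.2 - g q.2) 0) / ENNReal.ofReal (dRho ρ q p))
    (𝓝[svGraph F \ {p}] p)

/-- The nonlocal (g,ρ)-slope `|∇F|_{g,ρ}^◇(x,y)` of `F` at `p = (x,y) ∈ gph F`. -/
noncomputable def nonlocalGSlopeRho {X Y : Type*} [NormedAddCommGroup X] [NormedAddCommGroup Y]
    (F : X → Set Y) (g : Y → ℝ) (ρ : ℝ) (p : X × Y) : ℝ≥0∞ :=
  ⨆ (q : X × Y) (_ : q ∈ svGraph F ∧ q ≠ p),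
    ENNReal.ofReal (max (g p.2 - g q.2) 0) / ENNReal.ofReal (dRho ρ q p)

/-- The strict g-slope `|∇F|_g(x̄,ȳ)`. -/
noncomputable def strictGSlope {X Y : Type*} [NormedAddCommGroup X] [NormedAddCommGroup Y]
    (F : X → Set Y) (g : Y → ℝ) (xbar : X) (ybar : Y) : ℝ≥0∞ :=
  ⨆ (ρ : ℝ) (_ : 0 < ρ),
    ⨅ (p : X × Y) (_ : p ∈ svGraph F ∧ ybar ∉ F p.1 ∧
        dist p.1 xbar < ρ ∧ dist p.2 ybar < ρ),
      gSlopeRho F g ρ p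

/-- The modified strict g-slope `|∇F|_g^+(x̄,ȳ)`. -/
noncomputable def modStrictGSlope {X Y : Type*} [NormedAddCommGroup X] [NormedAddCommGroup Y]
    (F : X → Set Y) (g : Y → ℝ) (xbar : X) (ybar : Y) : ℝ≥0∞ :=
  ⨆ (ρ : ℝ) (_ : 0 < ρ),
    ⨅ (p : X × Y) (_ : p ∈ svGraph F ∧ ybar ∉ F p.1 ∧
        dist p.1 xbar < ρ ∧ dist p.2 ybar < ρ),
      max (gSlopeRho F g ρ p)
        (ENNReal.ofReal (g p.2) / ENNReal.ofReal (dist p.1 xbar))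

/-- The uniform strict g-slope `|∇F|_g^◇(x̄,ȳ)`. -/
noncomputable def uniformStrictGSlope {X Y : Type*} [NormedAddCommGroup X] [NormedAddCommGroup Y]
    (F : X → Set Y) (g : Y → ℝ) (xbar : X) (ybar : Y) : ℝ≥0∞ :=
  ⨆ (ρ : ℝ) (_ : 0 < ρ),
    ⨅ (p : X × Y) (_ : p ∈ svGraph F ∧ ybar ∉ F p.1 ∧
        dist p.1 xbar < ρ ∧ dist p.2 ybar < ρ),
      nonlocalGSlopeRho F g ρ p

/-- The Fréchet normal cone to a subset `Ω` of a product of normed spaces, as a set of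
pairs of continuous linear functionals (ε-form of the limsup definition). -/
def prodNormalCone {X Y : Type*} [NormedAddCommGroup X] [NormedSpace ℝ X]
    [NormedAddCommGroup Y] [NormedSpace ℝ Y]
    (Ω : Set (X × Y)) (p : X × Y) : Set ((X →L[ℝ] ℝ) × (Y →L[ℝ] ℝ)) :=
  {s | p ∈ Ω ∧ ∀ ε : ℝ, 0 < ε → ∀ᶠ q : X × Y in 𝓝[Ω \ {p}] p,
    s.1 (q.1 - p.1) + s.2 (q.2 - p.2) ≤ ε * ‖q - p‖}

/-- The Fréchet subdifferential of a real-valued function (ε-form of the liminf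
definition). -/
def fSubdiff {Y : Type*} [NormedAddCommGroup Y] [NormedSpace ℝ Y]
    (g : Y → ℝ) (y : Y) : Set (Y →L[ℝ] ℝ) :=
  {ys | ∀ ε : ℝ, 0 < ε → ∀ᶠ v in 𝓝 y, g y + ys (v - y) - ε * ‖v - y‖ ≤ g v}

/-- The subdifferential (g,ρ)-slope
`|∂F|_{g,ρ}(x,y) = inf{‖x*‖ : x* ∈ D*F(x,y)(∂g(y)+ρB*)}`, where
`x* ∈ D*F(x,y)(y*) ⇔ (x*,−y*) ∈ N_{gph F}(x,y)`. -/
noncomputable def subdiffGSlopeRho {X Y : Type*} [NormedAddCommGroup X] [NormedSpace ℝ X]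
    [NormedAddCommGroup Y] [NormedSpace ℝ Y]
    (F : X → Set Y) (g : Y → ℝ) (ρ : ℝ) (p : X × Y) : ℝ≥0∞ :=
  ⨅ (xs : X →L[ℝ] ℝ) (_ : ∃ ys vs : Y →L[ℝ] ℝ, vs ∈ fSubdiff g p.2 ∧ ‖ys - vs‖ ≤ ρ ∧
      (xs, -ys) ∈ prodNormalCone (svGraph F) p),
    ENNReal.ofReal ‖xs‖

/-- The strict subdifferential g-slope `|∂F|_g(x̄,ȳ)`. -/
noncomputable def strictSubdiffGSlope {X Y : Type*} [NormedAddCommGroup X] [NormedSpace ℝ X]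
    [NormedAddCommGroup Y] [NormedSpace ℝ Y]
    (F : X → Set Y) (g : Y → ℝ) (xbar : X) (ybar : Y) : ℝ≥0∞ :=
  ⨆ (ρ : ℝ) (_ : 0 < ρ),
    ⨅ (p : X × Y) (_ : p ∈ svGraph F ∧ ybar ∉ F p.1 ∧
        dist p.1 xbar < ρ ∧ dist p.2 ybar < ρ),
      subdiffGSlopeRho F g ρ p

/-- The modified strict subdifferential g-slope `|∂F|_g^+(x̄,ȳ)`. -/
noncomputable def modStrictSubdiffGSlope {X Y : Type*} [NormedAddCommGroup X] [NormedSpace ℝ X]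
    [NormedAddCommGroup Y] [NormedSpace ℝ Y]
    (F : X → Set Y) (g : Y → ℝ) (xbar : X) (ybar : Y) : ℝ≥0∞ :=
  ⨆ (ρ : ℝ) (_ : 0 < ρ),
    ⨅ (p : X × Y) (_ : p ∈ svGraph F ∧ ybar ∉ F p.1 ∧
        dist p.1 xbar < ρ ∧ dist p.2 ybar < ρ),
      max (subdiffGSlopeRho F g ρ p)
        (ENNReal.ofReal (g p.2) / ENNReal.ofReal (dist p.1 xbar))


lemma aux_sandwich {E : Type*} [NormedAddCommGroup E] [NormedSpace ℝ E] (φ k : E → ℝ) (C : Set E)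
    (hφ : ConvexOn ℝ Set.univ φ) (hc : Continuous φ) (hk : ConvexOn ℝ C k) (p : E) (hpC : p ∈ C)
    (hp : φ p + k p = 0) (h : ∀ q ∈ C, 0 ≤ φ q + k q) :
    ∃ l : E →L[ℝ] ℝ, (∀ q, l (q - p) ≤ φ q - φ p) ∧ ∀ q ∈ C, -(l (q - p)) ≤ k q - k p := by
  have hA : Convex ℝ {z : E × ℝ | φ z.1 < z.2} := by
    have := hφ.convex_strict_epigraph
    simpa using this
  have hAo : IsOpen {z : E × ℝ | φ z.1 < z.2} :=
    isOpen_lt (hc.comp continuous_fst) continuous_snd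
  have hB : Convex ℝ {z : E × ℝ | z.1 ∈ C ∧ z.2 ≤ (-k) z.1} := hk.neg.convex_hypograph
  have hd : Disjoint {z : E × ℝ | φ z.1 < z.2} {z : E × ℝ | z.1 ∈ C ∧ z.2 ≤ (-k) z.1} := by
    rw [Set.disjoint_left]
    rintro ⟨q, t⟩ h1 ⟨h2, h3⟩
    have := h q h2
    simp only [Set.mem_ofPred_eq, Pi.neg_apply] at h1 h2 h3
    linarith
  obtain ⟨f, s, hf1, hf2⟩ := geometric_hahn_banach_open hA hAo hB hd
  set c := f (0, 1) with hcdef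
  have key : ∀ q t, f (q, t) = f (q, 0) + t * c := by
    intro q t
    have : (q, t) = (q, (0:ℝ)) + t • ((0:E), (1:ℝ)) := by simp
    rw [this, map_add, map_smul, smul_eq_mul]
  have h1 : ∀ q t, φ q < t → f (q, 0) + t * c < s := by
    intro q t ht
    rw [← key]; exact hf1 (q, t) ht
  have h2 : ∀ q ∈ C, s ≤ f (q, 0) - k q * c := by
    intro q hq
    have := hf2 (q, -k q) ⟨hq, le_rfl⟩
    rw [key] at this; linarith
  have hcneg : c < 0 := by
    have a := h1 p (φ p + 1) (by linarith)
    have b := h2 p hpC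
    have e : k p = - φ p := by linarith
    rw [e] at b; nlinarith
  have h3 : ∀ q, f (q, 0) + φ q * c ≤ s := by
    intro q
    apply _root_.le_of_forall_pos_le_add
    intro ε hε
    have := h1 q (φ q + ε / (-c)) (by have : 0 < ε / (-c) := div_pos hε (by linarith)
                                      linarith)
    have e : ε / (-c) * c = -ε := by field_simp [hcneg.ne]
    rw [add_mul, e] at this; linarith
  have hsub : ∀ q, f (q - p, 0) = f (q, 0) - f (p, 0) := by
    intro q
    rw [← map_sub]; simp
  have ek : k p = - φ p := by linarith
  have hp2 := h2 p hpC
  have hp3 := h3 p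
  rw [ek] at hp2
  refine ⟨(-c)⁻¹ • f.comp (ContinuousLinearMap.inl ℝ E ℝ), ?_, ?_⟩
  · intro q
    have := h3 q
    simp only [_root_.smul_apply, ContinuousLinearMap.comp_apply,
      ContinuousLinearMap.inl_apply, smul_eq_mul, hsub]
    rw [inv_mul_le_iff₀ (by linarith)]
    linarith
  · intro q hq
    have := h2 q hq
    simp only [_root_.smul_apply, ContinuousLinearMap.comp_apply,
      ContinuousLinearMap.inl_apply, smul_eq_mul, hsub]
    rw [← mul_neg, inv_mul_le_iff₀ (by linarith), ek]
    linarith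

lemma aux_eps {a b : ℝ} (hb : 0 ≤ b) (h : ∀ ε : ℝ, 0 < ε → a ≤ ε * b) : a ≤ 0 := by
  apply _root_.le_of_forall_pos_le_add
  intro ε hε
  have h1 := h (ε / (b + 1)) (by positivity)
  have : ε / (b + 1) * b ≤ ε := by
    rw [div_mul_eq_mul_div, div_le_iff₀ (by linarith)]; nlinarith
  linarith

lemma aux_dRho_pos {X Y : Type*} [NormedAddCommGroup X] [NormedAddCommGroup Y]
    {ρ : ℝ} (hρ : 0 < ρ) {p q : X × Y} (h : q ≠ p) : 0 < dRho ρ q p := by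
  unfold dRho
  by_cases h1 : q.1 = p.1
  · have h2 : q.2 ≠ p.2 := fun h2 => h (Prod.ext h1 h2)
    exact lt_max_of_lt_right (mul_pos hρ (dist_pos.2 h2))
  · exact lt_max_of_lt_left (dist_pos.2 h1)

lemma aux_tendsto {X Y : Type*} [NormedAddCommGroup X] [NormedSpace ℝ X]
    [NormedAddCommGroup Y] [NormedSpace ℝ Y] {Ω : Set (X × Y)} (hΩ : Convex ℝ Ω)
    {p q : X × Y} (hp : p ∈ Ω) (hq : q ∈ Ω) (hne : q ≠ p) :
    Tendsto (fun t : ℝ => p + t • (q - p)) (𝓝[>] 0) (𝓝[Ω \ {p}] p) := by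
  apply tendsto_nhdsWithin_of_tendsto_nhds_of_eventually_within
  · have : Continuous (fun t : ℝ => p + t • (q - p)) := by fun_prop
    have h := this.tendsto 0
    simp only [zero_smul, add_zero] at h
    exact h.mono_left nhdsWithin_le_nhds
  · filter_upwards [Ioo_mem_nhdsGT (zero_lt_one' ℝ)] with t ht
    refine ⟨hΩ.add_smul_sub_mem hp hq ⟨ht.1.le, ht.2.le⟩, ?_⟩
    simp [ht.1.ne', sub_eq_zero, hne]

lemma aux_normal {X Y : Type*} [NormedAddCommGroup X] [NormedSpace ℝ X]
    [NormedAddCommGroup Y] [NormedSpace ℝ Y] {Ω : Set (X × Y)} (hΩ : Convex ℝ Ω)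
    {p : X × Y} {s} (hs : s ∈ prodNormalCone Ω p) {q : X × Y} (hq : q ∈ Ω) :
    s.1 (q.1 - p.1) + s.2 (q.2 - p.2) ≤ 0 := by
  by_cases hne : q = p
  · simp [hne]
  refine aux_eps (norm_nonneg (q - p)) fun ε hε => ?_
  have h1 := (aux_tendsto hΩ hs.1 hq hne).eventually (hs.2 ε hε)
  obtain ⟨t, h2, ht⟩ := (h1.and self_mem_nhdsWithin).exists
  have ht : 0 < t := ht
  simp only [Prod.fst_add, Prod.snd_add, Prod.smul_fst, Prod.smul_snd, Prod.fst_sub, Prod.snd_sub,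
    add_sub_cancel_left, map_smul, smul_eq_mul, norm_smul, Real.norm_eq_abs, abs_of_pos ht] at h2
  refine le_of_mul_le_mul_left (a := t) ?_ ht
  linarith

lemma aux_subdiff {Y : Type*} [NormedAddCommGroup Y] [NormedSpace ℝ Y] {g : Y → ℝ}
    (hg : ConvexOn ℝ Set.univ g) {y : Y} {s} (hs : s ∈ fSubdiff g y) (v : Y) :
    g y + s (v - y) ≤ g v := by
  suffices h : s (v - y) - (g v - g y) ≤ 0 by linarith
  refine aux_eps (norm_nonneg (v - y)) fun ε hε => ?_
  have hc : Continuous (fun t : ℝ => y + t • (v - y)) := by fun_prop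
  have h := hc.tendsto 0
  simp only [zero_smul, add_zero] at h
  have h1 := (h.mono_left nhdsWithin_le_nhds : Tendsto _ (𝓝[>] (0:ℝ)) _).eventually (hs ε hε)
  obtain ⟨t, h2, ht⟩ := (h1.and (Ioo_mem_nhdsGT (zero_lt_one' ℝ))).exists
  have ht0 : 0 < t := ht.1
  simp only [add_sub_cancel_left, map_smul, smul_eq_mul, norm_smul, Real.norm_eq_abs,
    abs_of_pos ht0] at h2
  have h3 := hg.2 (mem_univ y) (mem_univ v) (show 0 ≤ 1 - t by linarith [ht.2]) ht0.le
    (by ring)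
  have e : (1 - t) • y + t • v = y + t • (v - y) := by module
  rw [e] at h3
  simp only [smul_eq_mul] at h3
  refine le_of_mul_le_mul_left (a := t) ?_ ht0
  linarith

section
variable {X Y : Type*} [NormedAddCommGroup X] [NormedSpace ℝ X]
    [NormedAddCommGroup Y] [NormedSpace ℝ Y]

lemma aux_nonlocal_le {F : X → Set Y} {g : Y → ℝ} {ρ σ : ℝ} (hρ : 0 < ρ) (hσ : 0 ≤ σ)
    {p : X × Y} : nonlocalGSlopeRho F g ρ p ≤ ENNReal.ofReal σ ↔
      ∀ q ∈ svGraph F, g p.2 - g q.2 ≤ σ * dRho ρ q p := by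
  unfold nonlocalGSlopeRho
  rw [iSup₂_le_iff]
  constructor
  · intro h q hq
    by_cases hne : q = p
    · simp [hne, dRho]
    have h1 := h q ⟨hq, hne⟩
    have hd := aux_dRho_pos hρ hne
    rw [← ENNReal.ofReal_div_of_pos hd, ENNReal.ofReal_le_ofReal_iff hσ, div_le_iff₀ hd] at h1
    exact (le_max_left _ _).trans h1
  · rintro h q ⟨hq, hne⟩
    have hd := aux_dRho_pos hρ hne
    rw [← ENNReal.ofReal_div_of_pos hd, ENNReal.ofReal_le_ofReal_iff hσ, div_le_iff₀ hd]
    exact max_le (h q hq) (by positivity)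

lemma aux_local_eq {F : X → Set Y} {g : Y → ℝ} {ρ : ℝ} (hρ : 0 < ρ)
    (hF : Convex ℝ (svGraph F)) (hg : ConvexOn ℝ Set.univ g)
    {p : X × Y} (hp : p ∈ svGraph F) : gSlopeRho F g ρ p = nonlocalGSlopeRho F g ρ p := by
  apply le_antisymm
  · unfold gSlopeRho
    refine Filter.limsup_le_of_le (by isBoundedDefault) ?_
    filter_upwards [self_mem_nhdsWithin] with q hq
    exact le_iSup₂_of_le q ⟨hq.1, hq.2⟩ le_rfl
  · refine iSup₂_le ?_
    rintro q ⟨hq, hne⟩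
    unfold gSlopeRho
    refine Filter.le_limsup_of_frequently_le ?_ (by isBoundedDefault)
    refine (aux_tendsto hF hp hq hne).frequently (Eventually.frequently ?_)
    filter_upwards [Ioo_mem_nhdsGT (zero_lt_one' ℝ)] with t ht
    have ht0 : 0 < t := ht.1
    have hd := aux_dRho_pos hρ hne
    have ed : dRho ρ (p + t • (q - p)) p = t * dRho ρ q p := by
      unfold dRho
      rw [mul_max_of_nonneg _ _ ht0.le]
      simp only [dist_eq_norm, Prod.fst_add, Prod.snd_add, Prod.smul_fst, Prod.smul_snd,
        Prod.fst_sub, Prod.snd_sub, add_sub_cancel_left, norm_smul, Real.norm_eq_abs,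
        abs_of_pos ht0]
      congr 1; ring
    rw [ed, ← ENNReal.ofReal_div_of_pos hd, ← ENNReal.ofReal_div_of_pos (by positivity)]
    apply ENNReal.ofReal_le_ofReal
    rw [div_le_div_iff₀ hd (by positivity)]
    have h3 := hg.2 (mem_univ p.2) (mem_univ q.2) (show 0 ≤ 1 - t by linarith [ht.2]) ht0.le
      (by ring)
    have e : (1 - t) • p.2 + t • q.2 = (p + t • (q - p)).2 := by
      simp only [Prod.snd_add, Prod.smul_snd, Prod.snd_sub]; module
    rw [e] at h3
    simp only [smul_eq_mul] at h3
    have h4 : t * max (g p.2 - g q.2) 0 ≤ max (g p.2 - g (p + t • (q - p)).2) 0 := by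
      rw [mul_max_of_nonneg _ _ ht0.le, mul_zero]
      exact max_le_max (by linarith) le_rfl
    calc _ = (t * max (g p.2 - g q.2) 0) * dRho ρ q p := by ring
      _ ≤ _ := by gcongr

lemma aux_nonlocal_le_subdiff {F : X → Set Y} {g : Y → ℝ} {ρ ρ' : ℝ} (hρ : 0 < ρ) (hρ' : 0 < ρ')
    (hF : Convex ℝ (svGraph F)) (hg : ConvexOn ℝ Set.univ g) {p : X × Y} :
    nonlocalGSlopeRho F g ρ' p ≤ subdiffGSlopeRho F g ρ p + ENNReal.ofReal (ρ / ρ') := by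
  unfold subdiffGSlopeRho
  rw [ENNReal.iInf_add]
  refine le_iInf fun xs => ?_
  rw [ENNReal.iInf_add]
  refine le_iInf fun ⟨ys, vs, hvs, hyv, hN⟩ => ?_
  rw [← ENNReal.ofReal_add (norm_nonneg _) (by positivity),
    aux_nonlocal_le hρ' (by positivity)]
  intro q hq
  have h1 := aux_normal hF hN hq
  have h2 := aux_subdiff hg hvs q.2
  simp only [_root_.neg_apply] at h1
  have h3 : (ys - vs) (q.2 - p.2) ≤ ρ * dist q.2 p.2 := by
    rw [dist_eq_norm]
    refine (le_abs_self _).trans (((ys - vs).le_opNorm _).trans ?_)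
    gcongr
  have h4 : -(xs (q.1 - p.1)) ≤ ‖xs‖ * dist q.1 p.1 := by
    rw [dist_eq_norm]
    exact (neg_le_abs _).trans (xs.le_opNorm _)
  have h5 : ‖xs‖ * dist q.1 p.1 ≤ ‖xs‖ * dRho ρ' q p := by
    gcongr; exact le_max_left _ _
  have h6 : ρ * dist q.2 p.2 ≤ ρ / ρ' * dRho ρ' q p := by
    calc ρ * dist q.2 p.2 = ρ / ρ' * (ρ' * dist q.2 p.2) := by field_simp
      _ ≤ _ := by gcongr; exact le_max_right _ _
  simp only [_root_.sub_apply] at h3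
  linarith

lemma aux_dRho_convex (ρ : ℝ) (hρ : 0 ≤ ρ) (p : X × Y) :
    ConvexOn ℝ Set.univ (fun q => dRho ρ q p) := by
  unfold dRho
  have h1 : ConvexOn ℝ Set.univ (fun q : X × Y => dist q.1 p.1) :=
    (convexOn_univ_dist p.1).comp_linearMap (LinearMap.fst ℝ X Y)
  have h2 : ConvexOn ℝ Set.univ (fun q : X × Y => ρ * dist q.2 p.2) :=
    ((convexOn_univ_dist p.2).comp_linearMap (LinearMap.snd ℝ X Y)).smul hρ
  exact h1.sup h2

lemma aux_subdiff_le {F : X → Set Y} {g : Y → ℝ} {ρ ρ' σ : ℝ} (hρ' : 0 < ρ') (hσ : 0 ≤ σ)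
    (hF : Convex ℝ (svGraph F)) (hg : ConvexOn ℝ Set.univ g) (hgc : Continuous g) {p : X × Y}
    (hp : p ∈ svGraph F) (hle : nonlocalGSlopeRho F g ρ' p ≤ ENNReal.ofReal σ)
    (hρ : σ * ρ' ≤ ρ) :
    subdiffGSlopeRho F g ρ p ≤ ENNReal.ofReal σ := by
  rw [aux_nonlocal_le hρ' hσ] at hle
  have hdp : dRho ρ' p p = 0 := by simp [dRho]
  have hdc : Continuous (fun q : X × Y => dRho ρ' q p) := by unfold dRho; fun_prop
  have hdconv : ConvexOn ℝ Set.univ (fun q : X × Y => σ * dRho ρ' q p) :=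
    (aux_dRho_convex ρ' hρ'.le p).smul hσ
  obtain ⟨l, hl1, hl2⟩ := aux_sandwich (fun q : X × Y => g q.2 - g p.2)
    (fun q => σ * dRho ρ' q p) (svGraph F)
    ((hg.comp_linearMap (LinearMap.snd ℝ X Y)).sub (concaveOn_const _ convex_univ))
    (by fun_prop) (hdconv.subset (subset_univ _) hF) p hp (by simp [hdp])
    (fun q hq => by have := hle q hq; linarith)
  simp only [sub_self, sub_zero, hdp, mul_zero] at hl1 hl2
  have hl0 : ∀ w : X, l (w, 0) = 0 := by
    have : ∀ w : X, l (w, 0) ≤ 0 := by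
      intro w
      have h := hl1 (p + (w, 0))
      rw [add_sub_cancel_left] at h
      simpa using h
    intro w
    have a := this w
    have b := this (-w)
    have e : ((-w, 0) : X × Y) = -(w, 0) := by simp
    rw [e, map_neg] at b
    linarith
  have hls : ∀ z : X × Y, l z = l (0, z.2) := by
    intro z
    have e : z = (z.1, 0) + (0, z.2) := by simp
    conv_lhs => rw [e, map_add, hl0, zero_add]
  obtain ⟨m, hm1, hm2⟩ := aux_sandwich (fun q : X × Y => σ * dRho ρ' q p)
    (fun q => l q - l p) (svGraph F) hdconv (by fun_prop)
    ((l.toLinearMap.convexOn hF).sub (concaveOn_const _ hF)) p hp (by simp [hdp])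
    (fun q hq => by have := hl2 q hq; rw [map_sub] at this; linarith)
  simp only [sub_self, sub_zero, hdp, mul_zero] at hm1 hm2
  have hmx : ∀ w : X, m (w, 0) ≤ σ * ‖w‖ := by
    intro w
    have := hm1 (p + (w, 0))
    simpa [dRho] using this
  have hmy : ∀ w : Y, m (0, w) ≤ σ * ρ' * ‖w‖ := by
    intro w
    have := hm1 (p + (0, w))
    simp only [dRho, add_sub_cancel_left, Prod.fst_add, Prod.snd_add, add_zero, dist_self,
      dist_self_add_left] at this
    rwa [max_eq_right (by positivity), ← mul_assoc] at this
  let a : X →L[ℝ] ℝ := m.comp (ContinuousLinearMap.inl ℝ X Y)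
  let b : Y →L[ℝ] ℝ := m.comp (ContinuousLinearMap.inr ℝ X Y)
  let vs : Y →L[ℝ] ℝ := l.comp (ContinuousLinearMap.inr ℝ X Y)
  have ha : ‖a‖ ≤ σ := by
    refine a.opNorm_le_bound hσ fun w => ?_
    rw [Real.norm_eq_abs]
    refine abs_le'.2 ⟨hmx w, ?_⟩
    rw [← map_neg, ← norm_neg w]
    exact hmx (-w)
  have hb : ‖b‖ ≤ σ * ρ' := by
    refine b.opNorm_le_bound (by positivity) fun w => ?_
    rw [Real.norm_eq_abs]
    refine abs_le'.2 ⟨hmy w, ?_⟩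
    rw [← map_neg, ← norm_neg w]
    exact hmy (-w)
  unfold subdiffGSlopeRho
  refine iInf₂_le_of_le (-a) ⟨vs + b, vs, ?_, ?_, hp, ?_⟩ ?_
  · intro ε hε
    refine Eventually.of_forall fun v => ?_
    have := hl1 (p.1, v)
    rw [hls] at this
    have h2 : vs (v - p.2) = l (0, v - p.2) := rfl
    have h3 : 0 ≤ ε * ‖v - p.2‖ := by positivity
    simp only [Prod.snd_sub] at this
    linarith
  · simpa using hb.trans hρ
  · intro ε hε
    filter_upwards [self_mem_nhdsWithin] with q hq
    have h1 := hm2 q hq.1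
    have h3 : 0 ≤ ε * ‖q - p‖ := by positivity
    have h4 : m (q - p) = a (q.1 - p.1) + b (q.2 - p.2) := by
      have : m (q - p) = m ((q.1 - p.1, 0) + (0, q.2 - p.2)) := by
        congr 1; simp [Prod.ext_iff]
      rw [this, map_add]; rfl
    have h5 : l (q - p) = vs (q.2 - p.2) := hls _
    rw [map_sub] at h5
    simp only [_root_.neg_apply, _root_.add_apply]
    linarith
  · rw [norm_neg]
    exact ENNReal.ofReal_le_ofReal ha

lemma aux_nonlocal_anti {F : X → Set Y} {g : Y → ℝ} {ρ ρ' : ℝ} (hle : ρ' ≤ ρ) (p : X × Y) :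
    nonlocalGSlopeRho F g ρ p ≤ nonlocalGSlopeRho F g ρ' p := by
  unfold nonlocalGSlopeRho dRho
  gcongr

lemma aux_ratio {F : X → Set Y} {g : Y → ℝ} {xbar : X} {ybar : Y} {ρ c : ℝ} (hρ : 0 < ρ)
    (hgraph : ybar ∈ F xbar) (hg0 : g ybar = 0) {p : X × Y} (hy : ybar ∉ F p.1)
    (hp : p ∈ svGraph F) (hg : 0 < g p.2) (hc : c * dist p.2 ybar ≤ g p.2) :
    min (ENNReal.ofReal (g p.2) / ENNReal.ofReal (dist p.1 xbar)) (ENNReal.ofReal (c / ρ))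
      ≤ nonlocalGSlopeRho F g ρ p := by
  have hx : p.1 ≠ xbar := fun h => hy (h ▸ hgraph)
  have hyn : p.2 ≠ ybar := by
    rintro rfl
    exact hy hp
  have hne : (xbar, ybar) ≠ p := fun h => hx (by rw [← h])
  refine le_trans ?_ (le_iSup₂_of_le (xbar, ybar) ⟨hgraph, hne⟩ le_rfl)
  have hd := aux_dRho_pos hρ hne
  have hdx : 0 < dist p.1 xbar := dist_pos.2 hx
  have hdy : 0 < dist p.2 ybar := dist_pos.2 hyn
  rw [← ENNReal.ofReal_div_of_pos hd, ← ENNReal.ofReal_div_of_pos hdx]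
  simp only [hg0, sub_zero, max_eq_left hg.le]
  unfold dRho
  simp only [dist_comm xbar, dist_comm ybar]
  rcases le_total (dist p.1 xbar) (ρ * dist p.2 ybar) with h | h
  · rw [max_eq_right h]
    refine (min_le_right _ _).trans (ENNReal.ofReal_le_ofReal ?_)
    rw [div_le_div_iff₀ hρ (by positivity)]
    nlinarith
  · rw [max_eq_left h]
    exact min_le_left _ _

end

/-- Proposition 5P6 (iii): if both `F` and `g` are convex, then all five strict g-slopes
of `F` at `(x̄,ȳ)` coincide. -/
theorem strict_gslopes_eq_of_convex {X Y : Type*}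
    [NormedAddCommGroup X] [NormedSpace ℝ X] [NormedAddCommGroup Y] [NormedSpace ℝ Y]
    (F : X → Set Y) (xbar : X) (ybar : Y) (g : Y → ℝ)
    (hgraph : ybar ∈ F xbar)
    (hg0 : g ybar = 0)
    (hgnonneg : ∀ y : Y, 0 ≤ g y)
    (hgcont : ContinuousAt g ybar)
    (hgLip : ∀ y : Y, y ≠ ybar → ∃ (K : NNReal) (ε : ℝ), 0 < ε ∧
      LipschitzOnWith K g (Metric.ball y ε))
    (hP1 : ∀ y : Y, y ≠ ybar → 0 < g y)
    (hP2 : ∃ c : ℝ, 0 < c ∧ ∃ ε : ℝ, 0 < ε ∧ ∀ y : Y,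
      0 < g y → g y < ε → c * dist y ybar ≤ g y)
    (hFconv : Convex ℝ (svGraph F))
    (hgconv : ConvexOn ℝ Set.univ g) :
    uniformStrictGSlope F g xbar ybar = modStrictGSlope F g xbar ybar ∧
    modStrictGSlope F g xbar ybar = strictGSlope F g xbar ybar ∧
    strictGSlope F g xbar ybar = modStrictSubdiffGSlope F g xbar ybar ∧
    modStrictSubdiffGSlope F g xbar ybar = strictSubdiffGSlope F g xbar ybar := by
  have hgc : Continuous g := by
    rw [continuous_iff_continuousAt]
    intro y
    by_cases h : y = ybar
    · rw [h]; exact hgcont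
    · obtain ⟨K, ε, hε, hL⟩ := hgLip y h
      exact hL.continuousOn.continuousAt (Metric.ball_mem_nhds y hε)
  have hUS : uniformStrictGSlope F g xbar ybar = strictGSlope F g xbar ybar := by
    unfold uniformStrictGSlope strictGSlope
    refine iSup_congr fun ρ => iSup_congr fun hρ => iInf_congr fun p => iInf_congr fun hp => ?_
    exact (aux_local_eq hρ hFconv hgconv hp.1).symm
  -- uniform slope is at most the subdifferential slope
  have h1 : uniformStrictGSlope F g xbar ybar ≤ strictSubdiffGSlope F g xbar ybar := by
    unfold uniformStrictGSlope
    refine iSup₂_le fun ρ' hρ' => ?_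
    refine ENNReal.le_of_forall_pos_le_add fun δ hδ _ => ?_
    have hδ' : (0:ℝ) < δ := hδ
    set ρ := min ρ' (δ * ρ') with hρdef
    have hρ : 0 < ρ := lt_min hρ' (by positivity)
    have hr : ρ / ρ' ≤ δ := by
      rw [div_le_iff₀ hρ']; exact min_le_right _ _
    refine le_trans ?_ (add_le_add_left (le_iSup₂_of_le (f := fun (ρ : ℝ) (_ : 0 < ρ) =>
      ⨅ (p : X × Y) (_ : p ∈ svGraph F ∧ ybar ∉ F p.1 ∧
        dist p.1 xbar < ρ ∧ dist p.2 ybar < ρ), subdiffGSlopeRho F g ρ p) ρ hρ le_rfl) (δ : ℝ≥0∞))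
    rw [ENNReal.iInf_add]
    refine le_iInf fun p => ?_
    rw [ENNReal.iInf_add]
    refine le_iInf fun hp => ?_
    refine iInf₂_le_of_le p ⟨hp.1, hp.2.1, hp.2.2.1.trans_le (min_le_left _ _),
      hp.2.2.2.trans_le (min_le_left _ _)⟩ ?_
    refine (aux_nonlocal_le_subdiff hρ hρ' hFconv hgconv).trans ?_
    gcongr
    exact (ENNReal.ofReal_le_ofReal hr).trans_eq (ENNReal.ofReal_coe_nnreal)
  have h2 : strictSubdiffGSlope F g xbar ybar ≤ modStrictSubdiffGSlope F g xbar ybar := by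
    unfold strictSubdiffGSlope modStrictSubdiffGSlope
    gcongr
    exact le_max_left _ _
  have h3 : modStrictSubdiffGSlope F g xbar ybar ≤ modStrictGSlope F g xbar ybar := by
    refine le_of_forall_gt fun b hb => ?_
    obtain ⟨b', hb1, hb2⟩ := exists_between hb
    refine lt_of_le_of_lt ?_ hb2
    lift b' to NNReal using (hb2.trans_le le_top).ne
    unfold modStrictSubdiffGSlope
    refine iSup₂_le fun ρ hρ => ?_
    set ρ' : ℝ := ρ / (b' + 1) with hρdef
    have hb0 : (0:ℝ) ≤ b' := b'.2
    have hρ' : 0 < ρ' := by positivity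
    have hρle : ρ' ≤ ρ := div_le_self hρ.le (by linarith)
    have hbρ : b' * ρ' ≤ ρ := by
      rw [hρdef, mul_div_assoc', div_le_iff₀ (by linarith)]; nlinarith
    have h4 : (⨅ (p : X × Y) (_ : p ∈ svGraph F ∧ ybar ∉ F p.1 ∧
        dist p.1 xbar < ρ' ∧ dist p.2 ybar < ρ'), max (gSlopeRho F g ρ' p)
        (ENNReal.ofReal (g p.2) / ENNReal.ofReal (dist p.1 xbar))) < (b' : ℝ≥0∞) :=
      lt_of_le_of_lt (le_iSup₂_of_le (f := fun (ρ : ℝ) (_ : 0 < ρ) =>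
      ⨅ (p : X × Y) (_ : p ∈ svGraph F ∧ ybar ∉ F p.1 ∧
        dist p.1 xbar < ρ ∧ dist p.2 ybar < ρ), max (gSlopeRho F g ρ p)
        (ENNReal.ofReal (g p.2) / ENNReal.ofReal (dist p.1 xbar))) ρ' hρ' le_rfl) hb1
    simp only [iInf_lt_iff] at h4
    obtain ⟨p, hp, h5⟩ := h4
    refine iInf₂_le_of_le p ⟨hp.1, hp.2.1, hp.2.2.1.trans_le hρle, hp.2.2.2.trans_le hρle⟩ ?_
    rw [max_lt_iff] at h5
    refine max_le ?_ h5.2.le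
    rw [aux_local_eq hρ' hFconv hgconv hp.1] at h5
    rw [← ENNReal.ofReal_coe_nnreal] at h5 ⊢
    exact aux_subdiff_le hρ' hb0 hFconv hgconv hgc hp.1 h5.1.le hbρ
  have h4 : modStrictGSlope F g xbar ybar ≤ strictGSlope F g xbar ybar := by
    obtain ⟨c, hc, ε, hε, hcε⟩ := hP2
    obtain ⟨δ, hδ, hδg⟩ := Metric.continuousAt_iff.1 hgcont ε hε
    refine iSup₂_le fun ρ hρ => ?_
    refine le_of_forall_lt fun b hb => ?_
    obtain ⟨b', hb1, hb2⟩ := exists_between hb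
    refine lt_of_lt_of_le hb1 ?_
    lift b' to NNReal using (hb2.trans_le le_top).ne
    have hb0 : (0:ℝ) ≤ b' := b'.2
    set ρ' : ℝ := min (min ρ δ) (c / (b' + 1)) with hρdef
    have hρ' : 0 < ρ' := by positivity
    have hρle : ρ' ≤ ρ := (min_le_left _ _).trans (min_le_left _ _)
    have hρδ : ρ' ≤ δ := (min_le_left _ _).trans (min_le_right _ _)
    have hρb : b' ≤ c / ρ' := by
      have : ρ' ≤ c / (b' + 1) := min_le_right _ _
      rw [le_div_iff₀ (by linarith)] at this
      rw [le_div_iff₀ hρ']; nlinarith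
    unfold strictGSlope
    refine le_iSup₂_of_le ρ' hρ' (le_iInf₂ fun p hp => ?_)
    have hyn : p.2 ≠ ybar := by
      rintro h
      exact hp.2.1 (h ▸ hp.1)
    have hgp := hP1 _ hyn
    have hgε : g p.2 < ε := by
      have := hδg (hp.2.2.2.trans_le hρδ)
      rw [hg0, Real.dist_eq, sub_zero, abs_of_pos hgp] at this
      exact this
    have hr := aux_ratio (c := c) hρ' hgraph hg0 hp.2.1 hp.1 hgp (hcε _ hgp hgε)
    have hb3 := hb2.trans_le (iInf₂_le p ⟨hp.1, hp.2.1, hp.2.2.1.trans_le hρle,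
      hp.2.2.2.trans_le hρle⟩)
    rw [aux_local_eq hρ hFconv hgconv hp.1] at hb3
    rw [aux_local_eq hρ' hFconv hgconv hp.1]
    rcases lt_max_iff.1 hb3 with h | h
    · exact h.le.trans (aux_nonlocal_anti hρle p)
    · refine le_trans (le_min h.le ?_) hr
      rw [← ENNReal.ofReal_coe_nnreal]
      exact ENNReal.ofReal_le_ofReal hρb
  have e1 : uniformStrictGSlope F g xbar ybar = modStrictGSlope F g xbar ybar :=
    le_antisymm (h1.trans (h2.trans h3)) (hUS ▸ h4)
  have e2 : modStrictGSlope F g xbar ybar = strictGSlope F g xbar ybar := e1 ▸ hUS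
  have e3 : strictGSlope F g xbar ybar = modStrictSubdiffGSlope F g xbar ybar :=
    le_antisymm (hUS ▸ h1.trans h2) (h3.trans h4)
  have e4 : modStrictSubdiffGSlope F g xbar ybar = strictSubdiffGSlope F g xbar ybar :=
    le_antisymm (e3 ▸ hUS ▸ h1) h2
  exact ⟨e1, e2, e3, e4⟩
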